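/- arXiv:2003.00246 — 9 statements merged into one kernel-verified Lean document; each statement's English description precedes it below -/
import Mathlib

section
/- Let p_d > 0, θ ∈ (0,1), β_k > 0, β_e > 0, κ > 0, σ² ∈ (0,1), σ_q² ≥ 0, T' > 0 be real numbers. Define B₁ = π·T'·( 2θ β_k p_d/π + 2(1−θ)β_k p_d/π + β_k σ_q² p_d + 1 ) and B₂ = π·T'·( 2(1−θ)β_e p_d/π + β_e p_d σ_q² + 1 ). Then, as the natural number N tends to infinity, the quantity log₂(1 + 2θ β_k σ⁴ p_d N/B₁) − log₂(1 + 2θ β_e p_d σ² (κ σ² N + 1)/B₂) converges to log₂( β_k (p_d β_e (2−2θ+π σ_q²) + π) / ( κ β_e (p_d β_k (π σ_q²+2) + π) ) ). -/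
open Filter

/-! Both rates have the form `logb 2 (affine function of N)`, so their difference is the logarithm
of a ratio of affine functions, which tends to the ratio of the slopes. -/

lemma tendsto_logb_sub_logb_of_tendsto_div {α : Type*} {l : Filter α} {f g : α → ℝ} {r : ℝ}
    (b : ℝ) (h : Tendsto (fun x => f x / g x) l (nhds r)) (hr : r ≠ 0) :
    Tendsto (fun x => Real.logb b (f x) - Real.logb b (g x)) l (nhds (Real.logb b r)) := by
  refine ((h.log hr).div_const (Real.log b)).congr' ?_
  filter_upwards [h.eventually_ne hr] with x hx
  obtain ⟨hf, hg⟩ := div_ne_zero_iff.mp hx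
  exact Real.logb_div hf hg

lemma tendsto_logb_add_mul_sub_logb_add_mul (b x y : ℝ) {s t : ℝ} (hs : s ≠ 0) (ht : t ≠ 0) :
    Tendsto (fun n : ℕ => Real.logb b (x + s * n) - Real.logb b (y + t * n)) atTop
      (nhds (Real.logb b (s / t))) :=
  tendsto_logb_sub_logb_of_tendsto_div b (tendsto_add_mul_div_add_mul_atTop_nhds x y s ht)
    (div_ne_zero hs ht)

/-- The paper's `B₁`: interference, artificial noise, quantization noise and thermal noise at
the user, scaled by `π T'`. It is the denominator of the user's effective SINR. -/
noncomputable def userImpairment (pd θ βk σq2 T' : ℝ) : ℝ :=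
  Real.pi * T' * (2 * θ * βk * pd / Real.pi
    + 2 * (1 - θ) * βk * pd / Real.pi + βk * σq2 * pd + 1)

/-- The paper's `B₂`: artificial noise, quantization noise and thermal noise at the eavesdropper,
scaled by `π T'`. It is the denominator of the eavesdropper's effective SINR. -/
noncomputable def eveImpairment (pd θ βe σq2 T' : ℝ) : ℝ :=
  Real.pi * T' * (2 * (1 - θ) * βe * pd / Real.pi + βe * pd * σq2 + 1)

lemma userImpairment_eq (pd θ βk σq2 T' : ℝ) :
    userImpairment pd θ βk σq2 T' = T' * (pd * βk * (Real.pi * σq2 + 2) + Real.pi) := by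
  unfold userImpairment
  field_simp
  ring

lemma eveImpairment_eq (pd θ βe σq2 T' : ℝ) :
    eveImpairment pd θ βe σq2 T' = T' * (pd * βe * (2 - 2 * θ + Real.pi * σq2) + Real.pi) := by
  unfold eveImpairment
  field_simp

lemma userImpairment_pos {pd βk σq2 T' : ℝ} (θ : ℝ) (hpd : 0 ≤ pd) (hβk : 0 ≤ βk)
    (hσq : 0 ≤ σq2) (hT' : 0 < T') : 0 < userImpairment pd θ βk σq2 T' := by
  rw [userImpairment_eq]
  positivity

lemma eveImpairment_pos {pd θ βe σq2 T' : ℝ} (hpd : 0 ≤ pd) (hθ : θ ≤ 1) (hβe : 0 ≤ βe)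
    (hσq : 0 ≤ σq2) (hT' : 0 < T') : 0 < eveImpairment pd θ βe σq2 T' := by
  have : 0 ≤ 1 - θ := sub_nonneg.mpr hθ
  unfold eveImpairment
  positivity

lemma impairment_ratio_eq {pd θ βk βe σq2 T' : ℝ} (κ : ℝ) (hT' : T' ≠ 0) :
    βk * eveImpairment pd θ βe σq2 T' / (κ * βe * userImpairment pd θ βk σq2 T') =
      βk * (pd * βe * (2 - 2 * θ + Real.pi * σq2) + Real.pi) /
        (κ * βe * (pd * βk * (Real.pi * σq2 + 2) + Real.pi)) := by
  rw [eveImpairment_eq, userImpairment_eq, mul_left_comm βk, mul_left_comm (κ * βe),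
    mul_div_mul_left _ _ hT']

theorem stmt_2_general {pd θ βk βe κ σ2 σq2 T' : ℝ}
    (hpd : 0 < pd) (hθ : 0 < θ) (hβk : 0 < βk) (hβe : 0 < βe) (hκ : 0 < κ) (hσ : 0 < σ2)
    (hB₁ : 0 < userImpairment pd θ βk σq2 T') (hB₂ : 0 < eveImpairment pd θ βe σq2 T') :
    Tendsto (fun N : ℕ =>
      Real.logb 2 (1 + 2 * θ * βk * σ2 ^ 2 * pd * (N : ℝ) / userImpairment pd θ βk σq2 T')
      - Real.logb 2 (1 + 2 * θ * βe * pd * σ2 * (κ * σ2 * (N : ℝ) + 1) /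
        eveImpairment pd θ βe σq2 T'))
      atTop
      (nhds (Real.logb 2 (βk * (pd * βe * (2 - 2 * θ + Real.pi * σq2) + Real.pi) /
        (κ * βe * (pd * βk * (Real.pi * σq2 + 2) + Real.pi))))) := by
  have hT' : T' ≠ 0 := left_ne_zero_of_mul (userImpairment_eq pd θ βk σq2 T' ▸ hB₁.ne')
  rw [← impairment_ratio_eq κ hT']
  generalize userImpairment pd θ βk σq2 T' = B₁ at hB₁ ⊢
  generalize eveImpairment pd θ βe σq2 T' = B₂ at hB₂ ⊢
  have slope_ratio : (2 * θ * βk * σ2 ^ 2 * pd / B₁) / (2 * θ * βe * pd * σ2 * (κ * σ2) / B₂) =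
      βk * B₂ / (κ * βe * B₁) := by
    field_simp
  rw [← slope_ratio]
  refine (tendsto_logb_add_mul_sub_logb_add_mul 2 1 (1 + 2 * θ * βe * pd * σ2 / B₂)
    (by positivity) (by positivity)).congr fun N => ?_
  congr 2 <;> ring

/-- N → ∞ limit of the MRT-BF secrecy-rate lower bound with
random artificial noise (R-AN), equation (54), before taking the positive part. -/
theorem stmt_2 (pd θ βk βe κ σ2 σq2 T' : ℝ)
    (hpd : 0 < pd) (hθ : θ ∈ Set.Ioo (0:ℝ) 1) (hβk : 0 < βk) (hβe : 0 < βe)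
    (hκ : 0 < κ) (hσ : σ2 ∈ Set.Ioo (0:ℝ) 1) (hσq : 0 ≤ σq2) (hT' : 0 < T') :
    Tendsto (fun N : ℕ =>
      Real.logb 2 (1 + 2 * θ * βk * σ2 ^ 2 * pd * (N : ℝ) /
        (Real.pi * T' * (2 * θ * βk * pd / Real.pi
          + 2 * (1 - θ) * βk * pd / Real.pi + βk * σq2 * pd + 1)))
      - Real.logb 2 (1 + 2 * θ * βe * pd * σ2 * (κ * σ2 * (N : ℝ) + 1) /
        (Real.pi * T' * (2 * (1 - θ) * βe * pd / Real.pi + βe * pd * σq2 + 1))))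
      atTop
      (nhds (Real.logb 2 (βk * (pd * βe * (2 - 2 * θ + Real.pi * σq2) + Real.pi) /
        (κ * βe * (pd * βk * (Real.pi * σq2 + 2) + Real.pi))))) := by
  exact stmt_2_general hpd hθ.1 hβk hβe hκ hσ.1
    (userImpairment_pos θ hpd.le hβk.le hσq hT') (eveImpairment_pos hpd.le hθ.2.le hβe.le hσq hT')
end

section
/- Let p_d > 0, β_k > 0, β_e > 0, κ > 0, σ² ∈ (0,1), σ_q² ≥ 0 be real numbers with β_e ≥ σ² β_k. Then the function f : (0,1) → ℝ given by f(θ) = log₂( β_k (p_d β_e (2−2θ+π σ_q²) + π) / ( κ β_e (p_d β_k (2−2θσ²+π σ_q²) + π) ) ) is strictly decreasing on (0,1), and its supremum over θ ∈ (0,1) equals log₂( β_k (p_d β_e (π σ_q²+2) + π) / ( κ β_e (p_d β_k (π σ_q²+2) + π) ) ). -/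
open Filter

/-!
Up to constants, the argument of the logarithm is a linear fractional function
`(a θ + b) / (c θ + d)`, whose derivative has the sign of `a d - b c` throughout. When that
determinant is negative, the function decreases strictly on `[0, 1)`, so its supremum over `(0, 1)`
is its value at the left endpoint `θ = 0`. The determinant is negative exactly when
`σ² β_k (p_d β_e (π σ_q² + 2) + π) < β_e (p_d β_k (π σ_q² + 2) + π)`, and the two sides differ by
`p_d β_k β_e (π σ_q² + 2) (1 - σ²) + π (β_e - σ² β_k)`.
-/

section

open Set Topology

theorem sSup_image_Ioo_eq_of_antitoneOn_Ico {α β : Type*}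
    [LinearOrder α] [DenselyOrdered α] [TopologicalSpace α] [OrderTopology α]
    [ConditionallyCompleteLinearOrder β] [TopologicalSpace β] [OrderTopology β]
    {f : α → β} {u v : α} (huv : u < v) (hf : AntitoneOn f (Ico u v))
    (hcont : ContinuousWithinAt f (Ioi u) u) : sSup (f '' Ioo u v) = f u := by
  have hbdd : BddAbove (f '' Ioo u v) := by
    refine ⟨f u, ?_⟩
    rintro _ ⟨x, hx, rfl⟩
    exact hf (left_mem_Ico.2 huv) (Ioo_subset_Ico_self hx) hx.1.le
  have hlim : Tendsto f (𝓝[>] u) (𝓝 (sSup (f '' Ioo u v))) :=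
    (hf.mono Ioo_subset_Ico_self).tendsto_nhdsWithin_Ioo_right (nonempty_Ioo.2 huv) hbdd
  have : (𝓝[>] u).NeBot := nhdsGT_neBot_of_exists_gt ⟨v, huv⟩
  exact tendsto_nhds_unique hlim hcont

section OrderedField

variable {𝕜 : Type*} [Field 𝕜] [LinearOrder 𝕜] [IsStrictOrderedRing 𝕜] {a b c d : 𝕜}

theorem strictAntiOn_linearFractional {s : Set 𝕜} (hdet : a * d < b * c)
    (hden : ∀ x ∈ s, 0 < c * x + d) : StrictAntiOn (fun x ↦ (a * x + b) / (c * x + d)) s := by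
  intro x hx y hy hxy
  rw [div_lt_div_iff₀ (hden y hy) (hden x hx), ← sub_pos]
  calc 0 < (b * c - a * d) * (y - x) := mul_pos (sub_pos.2 hdet) (sub_pos.2 hxy)
    _ = (a * x + b) * (c * y + d) - (a * y + b) * (c * x + d) := by ring

theorem linearFractional_den_pos_of_num_pos {x : 𝕜} (hb : 0 < b) (hd : 0 < d)
    (hdet : a * d ≤ b * c) (hx : 0 ≤ x) (hnum : 0 < a * x + b) : 0 < c * x + d := by
  refine pos_of_mul_pos_right ?_ hb.le
  calc 0 < d * (a * x + b) := mul_pos hd hnum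
    _ = a * d * x + b * d := by ring
    _ ≤ b * c * x + b * d := by gcongr
    _ = b * (c * x + d) := by ring

end OrderedField

section LogLinearFractional

variable {B a b c d v : ℝ}

theorem strictAntiOn_logb_linearFractional (hB : 1 < B) (hb : 0 < b) (hd : 0 < d)
    (hdet : a * d < b * c) (hnum : ∀ x ∈ Ico 0 v, 0 < a * x + b) :
    StrictAntiOn (fun x ↦ Real.logb B ((a * x + b) / (c * x + d))) (Ico 0 v) := by
  have hden : ∀ x ∈ Ico 0 v, 0 < c * x + d := fun x hx ↦
    linearFractional_den_pos_of_num_pos hb hd hdet.le hx.1 (hnum x hx)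
  exact (Real.strictMonoOn_logb hB).comp_strictAntiOn (strictAntiOn_linearFractional hdet hden)
    fun x hx ↦ div_pos (hnum x hx) (hden x hx)

theorem continuousAt_logb_linearFractional_zero (hb : b ≠ 0) (hd : d ≠ 0) :
    ContinuousAt (fun x ↦ Real.logb B ((a * x + b) / (c * x + d))) 0 := by
  have hquot : ContinuousAt (fun x ↦ (a * x + b) / (c * x + d)) 0 :=
    ContinuousAt.div (by fun_prop) (by fun_prop) (by simpa using hd)
  exact (hquot.log (by simp [hb, hd])).div_const _

theorem sSup_image_Ioo_logb_linearFractional (hB : 1 < B) (hv : 0 < v) (hb : 0 < b) (hd : 0 < d)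
    (hdet : a * d < b * c) (hnum : ∀ x ∈ Ico 0 v, 0 < a * x + b) :
    sSup ((fun x ↦ Real.logb B ((a * x + b) / (c * x + d))) '' Ioo 0 v) =
      Real.logb B (b / d) := by
  have hanti := strictAntiOn_logb_linearFractional hB hb hd hdet hnum
  have hcont := continuousAt_logb_linearFractional_zero (B := B) (a := a) (c := c) hb.ne' hd.ne'
  simpa using sSup_image_Ioo_eq_of_antitoneOn_Ico hv hanti.antitoneOn hcont.continuousWithinAt

end LogLinearFractional

end

theorem determinant_condition_of_mul_le {p s e σ t r : ℝ} (hp : 0 < p) (hs : 0 < s) (he : 0 < e)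
    (ht : 0 < t) (hr : 0 ≤ r) (hσ : σ < 1) (hdom : σ * s ≤ e) :
    σ * s * (p * e * t + r) < e * (p * s * t + r) := by
  have hgap : 0 < p * s * e * t * (1 - σ) := mul_pos (by positivity) (sub_pos.2 hσ)
  have hdom_gap : 0 ≤ r * (e - σ * s) := mul_nonneg hr (sub_nonneg.2 hdom)
  linear_combination hgap + hdom_gap

theorem stmt_6_general (pd βk βe κ σ2 σq2 : ℝ)
    (hpd : 0 < pd) (hβk : 0 < βk) (hβe : 0 < βe) (hκ : 0 < κ) (hσq : 0 ≤ σq2)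
    (hdet : σ2 * βk * (pd * βe * (Real.pi * σq2 + 2) + Real.pi) <
      βe * (pd * βk * (Real.pi * σq2 + 2) + Real.pi)) :
    StrictAntiOn (fun θ : ℝ =>
        Real.logb 2 (βk * (pd * βe * (2 - 2 * θ + Real.pi * σq2) + Real.pi) /
          (κ * βe * (pd * βk * (2 - 2 * θ * σ2 + Real.pi * σq2) + Real.pi))))
      (Set.Ioo 0 1) ∧
    sSup ((fun θ : ℝ =>
        Real.logb 2 (βk * (pd * βe * (2 - 2 * θ + Real.pi * σq2) + Real.pi) /
          (κ * βe * (pd * βk * (2 - 2 * θ * σ2 + Real.pi * σq2) + Real.pi)))) '' Set.Ioo 0 1)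
      = Real.logb 2 (βk * (pd * βe * (Real.pi * σq2 + 2) + Real.pi) /
          (κ * βe * (pd * βk * (Real.pi * σq2 + 2) + Real.pi))) := by
  set b := βk * (pd * βe * (Real.pi * σq2 + 2) + Real.pi)
  set d := κ * βe * (pd * βk * (Real.pi * σq2 + 2) + Real.pi)
  let a := -(2 * pd * βk * βe)
  let c := -(2 * κ * pd * βk * βe * σ2)
  have hb : 0 < b := by positivity
  have hd : 0 < d := by positivity
  have hnum_eq (θ : ℝ) :
      βk * (pd * βe * (2 - 2 * θ + Real.pi * σq2) + Real.pi) = a * θ + b := by ring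
  have hden_eq (θ : ℝ) :
      κ * βe * (pd * βk * (2 - 2 * θ * σ2 + Real.pi * σq2) + Real.pi) = c * θ + d := by ring
  have hnum : ∀ θ ∈ Set.Ico (0 : ℝ) 1, 0 < a * θ + b := by
    intro θ hθ
    have : 0 < 2 - 2 * θ := by linarith [hθ.2]
    rw [← hnum_eq]
    positivity
  have hdet' : a * d < b * c := by
    have := mul_lt_mul_of_pos_left hdet (show 0 < 2 * κ * pd * βk * βe by positivity)
    linear_combination this
  simp only [hnum_eq, hden_eq]
  exact ⟨(strictAntiOn_logb_linearFractional one_lt_two hb hd hdet' hnum).mono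
      Set.Ioo_subset_Ico_self,
    sSup_image_Ioo_logb_linearFractional one_lt_two one_pos hb hd hdet' hnum⟩

/-- the asymptotic ZF-BF / R-AN secrecy-rate function f₁(θ) is
strictly decreasing on (0,1) (under the sufficient hypothesis β_e ≥ σ²β_k),
with its supremum given by equation (49). -/
theorem stmt_6 (pd βk βe κ σ2 σq2 : ℝ)
    (hpd : 0 < pd) (hβk : 0 < βk) (hβe : 0 < βe) (hκ : 0 < κ)
    (hσ : σ2 ∈ Set.Ioo (0:ℝ) 1) (hσq : 0 ≤ σq2) (hdom : σ2 * βk ≤ βe) :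
    StrictAntiOn (fun θ : ℝ =>
        Real.logb 2 (βk * (pd * βe * (2 - 2 * θ + Real.pi * σq2) + Real.pi) /
          (κ * βe * (pd * βk * (2 - 2 * θ * σ2 + Real.pi * σq2) + Real.pi))))
      (Set.Ioo 0 1) ∧
    sSup ((fun θ : ℝ =>
        Real.logb 2 (βk * (pd * βe * (2 - 2 * θ + Real.pi * σq2) + Real.pi) /
          (κ * βe * (pd * βk * (2 - 2 * θ * σ2 + Real.pi * σq2) + Real.pi)))) '' Set.Ioo 0 1)
      = Real.logb 2 (βk * (pd * βe * (Real.pi * σq2 + 2) + Real.pi) /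
          (κ * βe * (pd * βk * (Real.pi * σq2 + 2) + Real.pi))) := by
  refine stmt_6_general pd βk βe κ σ2 σq2 hpd hβk hβe hκ hσq ?_
  exact determinant_condition_of_mul_le hpd hβk hβe (by positivity) Real.pi_nonneg hσ.2 hdom
end

section
/- Let p_d > 0, β_k > 0, β_e > 0, κ > 0, σ² ∈ (0,1) with κσ² < 1, σ_q² ≥ 0 be real numbers, and set c = π σ_q² + 2. Define V_R = β_k (p_d β_e c + π) / ( κ β_e (p_d β_k c + π) ) and V_NS = β_k (p_d β_e (c − 2κσ²) + π) / ( κ β_e (p_d β_k (c − 2σ²) + π) ). Then the following are equivalent: (i) V_R > 1; (ii) V_NS > 1; (iii) κ < β_k (p_d β_e c + π) / ( β_e (p_d β_k c + π) ). -/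
section OrderedField

variable {K : Type*} [Field K] [LinearOrder K] [IsStrictOrderedRing K]

theorem one_lt_sub_div_sub_iff {a b d : K} (hb : 0 < b) (hbd : 0 < b - d) :
    1 < (a - d) / (b - d) ↔ 1 < a / b := by
  rw [one_lt_div hbd, one_lt_div hb, sub_lt_sub_iff_right]

theorem one_lt_div_mul_iff_lt_div {κ : K} (hκ : 0 < κ) (a b : K) :
    1 < a / (κ * b) ↔ κ < a / b := by
  rw [mul_comm, ← div_div, one_lt_div hκ]

theorem stmt_7_general {pd βk βe κ σ2 c ν : K} (hβe : 0 < βe) (hκ : 0 < κ)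
    (hR : 0 < pd * βk * c + ν) (hNS : 0 < pd * βk * (c - 2 * σ2) + ν) :
    List.TFAE [1 < βk * (pd * βe * c + ν) / (κ * βe * (pd * βk * c + ν)),
      1 < βk * (pd * βe * (c - 2 * κ * σ2) + ν) / (κ * βe * (pd * βk * (c - 2 * σ2) + ν)),
      κ < βk * (pd * βe * c + ν) / (βe * (pd * βk * c + ν))] := by
  have numerator_eq : βk * (pd * βe * (c - 2 * κ * σ2) + ν) =
      βk * (pd * βe * c + ν) - 2 * κ * σ2 * pd * βe * βk := by ring
  have denominator_eq : κ * βe * (pd * βk * (c - 2 * σ2) + ν) =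
      κ * βe * (pd * βk * c + ν) - 2 * κ * σ2 * pd * βe * βk := by ring
  have denominator_pos : 0 < κ * βe * (pd * βk * (c - 2 * σ2) + ν) := by positivity
  tfae_have 2 ↔ 1 := by
    rw [denominator_eq] at denominator_pos
    rw [numerator_eq, denominator_eq]
    exact one_lt_sub_div_sub_iff (by positivity) denominator_pos
  tfae_have 1 ↔ 3 := by
    rw [mul_assoc κ βe]
    exact one_lt_div_mul_iff_lt_div hκ _ _
  tfae_finish

end OrderedField

/-- positivity of the asymptotic maximum secrecy rates of
Corollary 1 (equations (49) and (50)) is simultaneous for R-AN and NS-AN,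
and equivalent to a threshold on the received-power ratio κ. -/
theorem stmt_7 (pd βk βe κ σ2 σq2 c VR VNS : ℝ)
    (hpd : 0 < pd) (hβk : 0 < βk) (hβe : 0 < βe) (hκ : 0 < κ)
    (hσ : σ2 ∈ Set.Ioo (0:ℝ) 1) (hκσ : κ * σ2 < 1) (hσq : 0 ≤ σq2)
    (hc : c = Real.pi * σq2 + 2)
    (hVR : VR = βk * (pd * βe * c + Real.pi) / (κ * βe * (pd * βk * c + Real.pi)))
    (hVNS : VNS = βk * (pd * βe * (c - 2 * κ * σ2) + Real.pi) /
      (κ * βe * (pd * βk * (c - 2 * σ2) + Real.pi))) :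
    List.TFAE [VR > 1, VNS > 1,
      κ < βk * (pd * βe * c + Real.pi) / (βe * (pd * βk * c + Real.pi))] := by
  subst hVR hVNS
  have hc_pos : 0 < c := by rw [hc]; positivity
  have hcσ_pos : 0 < c - 2 * σ2 := by linarith [hσ.2, mul_nonneg Real.pi_pos.le hσq]
  exact stmt_7_general hβe hκ (by positivity) (by positivity)
end

section
/- Let p_d > 0, β_k > 0, β_e > 0, κ > 0, σ² ∈ (0,1) with κσ² < 1, σ_q² ≥ 0 be real numbers, and set c = π σ_q² + 2. Define V_R = β_k (p_d β_e c + π) / ( κ β_e (p_d β_k c + π) ) and V_NS = β_k (p_d β_e (c − 2κσ²) + π) / ( κ β_e (p_d β_k (c − 2σ²) + π) ). If V_R > 1, then V_NS > V_R; consequently log₂ V_NS − log₂ V_R > 0. -/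
/-!
Write `VR = A / B`. Passing from random to nullspace artificial noise subtracts the same amount
`δ = 2 κ σ² p_d β_k β_e` from numerator and denominator, so `VNS = (A - δ) / (B - δ)`. Since
`(A - x) / (B - x) = 1 + (A - B) / (B - x)`, this increases a fraction that exceeds `1`.
-/

theorem div_lt_sub_div_sub_of_lt {K : Type*} [Field K] [LinearOrder K] [IsStrictOrderedRing K]
    {a b d : K} (hd : 0 < d) (hdb : d < b) (hba : b < a) : a / b < (a - d) / (b - d) := by
  rw [div_lt_div_iff₀ (hd.trans hdb) (sub_pos.2 hdb)]
  linarith [mul_lt_mul_of_pos_left hba hd]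

theorem stmt_8_general {pd βk βe κ σ2 c VR VNS : ℝ}
    (hpd : 0 < pd) (hβk : 0 < βk) (hβe : 0 < βe) (hκ : 0 < κ) (hσ : 0 < σ2)
    (hden : 0 < pd * βk * (c - 2 * σ2) + Real.pi)
    (hVR : VR = βk * (pd * βe * c + Real.pi) / (κ * βe * (pd * βk * c + Real.pi)))
    (hVNS : VNS = βk * (pd * βe * (c - 2 * κ * σ2) + Real.pi) /
      (κ * βe * (pd * βk * (c - 2 * σ2) + Real.pi)))
    (hpos : 1 < VR) :
    VR < VNS ∧ 0 < Real.logb 2 VNS - Real.logb 2 VR := by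
  set A := βk * (pd * βe * c + Real.pi)
  set B := κ * βe * (pd * βk * c + Real.pi)
  set δ := 2 * κ * σ2 * pd * βk * βe
  have num_eq : βk * (pd * βe * (c - 2 * κ * σ2) + Real.pi) = A - δ := by ring
  have den_eq : κ * βe * (pd * βk * (c - 2 * σ2) + Real.pi) = B - δ := by ring
  have hδ : 0 < δ := by positivity
  have hδB : δ < B := sub_pos.1 (den_eq ▸ mul_pos (mul_pos hκ hβe) hden)
  have hBA : B < A := (one_lt_div (hδ.trans hδB)).1 (hVR ▸ hpos)
  have hlt : VR < VNS := by
    rw [hVR, hVNS, num_eq, den_eq]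
    exact div_lt_sub_div_sub_of_lt hδ hδB hBA
  exact ⟨hlt, sub_pos.2 (Real.logb_lt_logb one_lt_two (zero_lt_one.trans hpos) hlt)⟩

/-- equation (52): whenever the asymptotic secrecy rate without
power scaling is positive, NS-AN strictly outperforms R-AN asymptotically. -/
theorem stmt_8 (pd βk βe κ σ2 σq2 c VR VNS : ℝ)
    (hpd : 0 < pd) (hβk : 0 < βk) (hβe : 0 < βe) (hκ : 0 < κ)
    (hσ : σ2 ∈ Set.Ioo (0:ℝ) 1) (hκσ : κ * σ2 < 1) (hσq : 0 ≤ σq2)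
    (hc : c = Real.pi * σq2 + 2)
    (hVR : VR = βk * (pd * βe * c + Real.pi) / (κ * βe * (pd * βk * c + Real.pi)))
    (hVNS : VNS = βk * (pd * βe * (c - 2 * κ * σ2) + Real.pi) /
      (κ * βe * (pd * βk * (c - 2 * σ2) + Real.pi)))
    (hpos : VR > 1) :
    VNS > VR ∧ Real.logb 2 VNS - Real.logb 2 VR > 0 := by
  have hgap : 0 < c - 2 * σ2 := by linarith [mul_nonneg Real.pi_pos.le hσq, hσ.2]
  exact stmt_8_general hpd hβk hβe hκ hσ.1 (by positivity) hVR hVNS hpos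
end

section
/- Let ρ > 0, θ ∈ (0,1), β_k > 0, β_e > 0, κ > 0, σ² ∈ (0,1), σ_q² ≥ 0, T > 0, a_k ≥ 0, a_e ≥ 0 be real numbers and K ≥ 1 a natural number. For each natural number N ≥ 1, set p(N) = ρ/√N, A₁(N) = π·T·( a_k p(N) + (2θ β_k p(N)/π)(1−σ²) + β_k σ_q² p(N) + 1 ) and A₂(N) = π·T·( a_e p(N) + β_e p(N) σ_q² + 1 ). Then, as N tends to infinity, the quantity log₂(1 + 2θ β_k p(N) (N−K)/A₁(N)) − log₂(1 + 2θ β_e p(N) (κ(N−K−1) + 1/σ²)/A₂(N)) converges to log₂( β_k / (κ β_e) ). -/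
open Filter

/-!
With transmit power `p N`, both signal-to-noise ratios grow like `N * p N`, while every noise term
proportional to the power dies out and leaves the same noise floor `π * T` at the user and at the
eavesdropper. Hence the ratio of the two arguments of the logarithm tends to the quotient
`2θβk / (2θβe * κ)` of the signal gains, whatever the artificial noise is. The scaling
`p N = ρ / √N` is one for which `p N → 0` and `N * p N → ∞`.
-/

open scoped Topology

section OrderedField

variable {ι 𝕜 : Type*} [Field 𝕜] [LinearOrder 𝕜] [IsStrictOrderedRing 𝕜] [TopologicalSpace 𝕜]
  [OrderTopology 𝕜] {l : Filter ι} {s x y : ι → 𝕜} {a b : 𝕜}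

theorem tendsto_const_add_div_of_tendsto_atTop (c : 𝕜) (hs : Tendsto s l atTop)
    (hx : Tendsto (fun i => x i / s i) l (𝓝 a)) :
    Tendsto (fun i => (c + x i) / s i) l (𝓝 a) := by
  simpa only [add_div, zero_add] using (hs.const_div_atTop c).add hx

theorem tendsto_affine_div_of_tendsto_atTop (a c : 𝕜) (hs : Tendsto s l atTop) :
    Tendsto (fun i => (c + a * s i) / s i) l (𝓝 a) := by
  refine tendsto_const_add_div_of_tendsto_atTop c hs (tendsto_const_nhds.congr' ?_)
  filter_upwards [hs.eventually_ne_atTop 0] with i hi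
  rw [mul_div_cancel_right₀ a hi]

theorem tendsto_div_of_tendsto_div_atTop (hs : Tendsto s l atTop)
    (hx : Tendsto (fun i => x i / s i) l (𝓝 a)) (hy : Tendsto (fun i => y i / s i) l (𝓝 b))
    (hb : b ≠ 0) : Tendsto (fun i => x i / y i) l (𝓝 (a / b)) := by
  refine (hx.div hy hb).congr' ?_
  filter_upwards [hs.eventually_ne_atTop 0] with i hi
  exact div_div_div_cancel_right₀ hi (x i) (y i)

theorem tendsto_one_add_snr_div {n p q A : ι → 𝕜} {γ A₀ : 𝕜} (c : 𝕜)
    (hnp : Tendsto (fun i => n i * p i) l atTop) (hq : Tendsto (fun i => q i / n i) l (𝓝 γ))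
    (hA : Tendsto A l (𝓝 A₀)) (hA₀ : A₀ ≠ 0) :
    Tendsto (fun i => (1 + c * p i * q i / A i) / (n i * p i)) l (𝓝 (c * γ / A₀)) := by
  have gain : Tendsto (fun i => c * (q i / n i) / A i) l (𝓝 (c * γ / A₀)) :=
    (hq.const_mul c).div hA hA₀
  refine tendsto_const_add_div_of_tendsto_atTop 1 hnp (gain.congr' ?_)
  filter_upwards [hnp.eventually_ne_atTop 0] with i hi
  have hp : p i ≠ 0 := right_ne_zero_of_mul hi
  field_simp

end OrderedField

theorem tendsto_logb_sub_logb {ι : Type*} {l : Filter ι} {f g : ι → ℝ} {c : ℝ} (b : ℝ)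
    (h : Tendsto (fun i => f i / g i) l (𝓝 c)) (hc : c ≠ 0) :
    Tendsto (fun i => Real.logb b (f i) - Real.logb b (g i)) l (𝓝 (Real.logb b c)) := by
  refine ((h.log hc).div_const (Real.log b)).congr' ?_
  filter_upwards [h.eventually_ne hc] with i hi
  obtain ⟨hf, hg⟩ := div_ne_zero_iff.mp hi
  exact Real.logb_div hf hg

theorem tendsto_const_div_sqrt_natCast (ρ : ℝ) :
    Tendsto (fun N : ℕ => ρ / Real.sqrt N) atTop (𝓝 0) :=
  (Real.tendsto_sqrt_atTop.comp tendsto_natCast_atTop_atTop).const_div_atTop ρ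

theorem tendsto_natCast_mul_const_div_sqrt {ρ : ℝ} (hρ : 0 < ρ) :
    Tendsto (fun N : ℕ => (N : ℝ) * (ρ / Real.sqrt N)) atTop atTop := by
  refine ((Real.tendsto_sqrt_atTop.comp tendsto_natCast_atTop_atTop).const_mul_atTop hρ).congr ?_
  intro N
  rw [mul_div_left_comm, Real.div_sqrt, Function.comp_apply]

/- `ck` and `ce` collect all noise per unit of transmit power (artificial-noise leakage, channel
estimation error, quantization), and `ν` stands for `1 / σ2`. -/
theorem stmt_9_general {p : ℕ → ℝ} (hp : Tendsto p atTop (𝓝 0))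
    (hNp : Tendsto (fun N : ℕ => (N : ℝ) * p N) atTop atTop) {θ βk βe κ T : ℝ}
    (hθ : 0 < θ) (hβk : 0 < βk) (hβe : 0 < βe) (hκ : 0 < κ) (hT : 0 < T) (ck ce ν K : ℝ) :
    Tendsto (fun N : ℕ =>
      Real.logb 2 (1 + 2 * θ * βk * p N * (N - K) / (Real.pi * T * (ck * p N + 1)))
      - Real.logb 2 (1 + 2 * θ * βe * p N * (κ * (N - K - 1) + ν) /
          (Real.pi * T * (ce * p N + 1))))
      atTop (𝓝 (Real.logb 2 (βk / (κ * βe)))) := by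
  have floor_pos : 0 < Real.pi * T := mul_pos Real.pi_pos hT
  have noise (c : ℝ) : Tendsto (fun N => Real.pi * T * (c * p N + 1)) atTop (𝓝 (Real.pi * T)) := by
    simpa using ((hp.const_mul c).add_const 1).const_mul (Real.pi * T)
  have gain_user : Tendsto (fun N : ℕ => ((N : ℝ) - K) / N) atTop (𝓝 1) :=
    (tendsto_affine_div_of_tendsto_atTop 1 (-K) tendsto_natCast_atTop_atTop).congr fun N => by ring
  have gain_eve : Tendsto (fun N : ℕ => (κ * ((N : ℝ) - K - 1) + ν) / N) atTop (𝓝 κ) :=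
    (tendsto_affine_div_of_tendsto_atTop κ (ν - κ * (K + 1)) tendsto_natCast_atTop_atTop).congr
      fun N => by ring
  have user := tendsto_one_add_snr_div (2 * θ * βk) hNp gain_user (noise ck) floor_pos.ne'
  have eve := tendsto_one_add_snr_div (2 * θ * βe) hNp gain_eve (noise ce) floor_pos.ne'
  have ratio := tendsto_div_of_tendsto_div_atTop hNp user eve (by positivity)
  have limit_eq : 2 * θ * βk * 1 / (Real.pi * T) / (2 * θ * βe * κ / (Real.pi * T))
      = βk / (κ * βe) := by
    field_simp
  rw [limit_eq] at ratio
  exact tendsto_logb_sub_logb 2 ratio (by positivity)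

/-- Corollary 2, ZF-BF: under the 1/√N power-scaling regime the
secrecy-rate lower bound converges to log₂(β_k/(κβ_e)), irrespective of the
artificial-noise scheme (parameterized by the leakage constants a_k, a_e). -/
theorem stmt_9 (ρ θ βk βe κ σ2 σq2 T ak ae : ℝ) (K : ℕ)
    (hρ : 0 < ρ) (hθ : θ ∈ Set.Ioo (0:ℝ) 1) (hβk : 0 < βk) (hβe : 0 < βe)
    (hκ : 0 < κ) (hσ : σ2 ∈ Set.Ioo (0:ℝ) 1) (hσq : 0 ≤ σq2) (hT : 0 < T)
    (hak : 0 ≤ ak) (hae : 0 ≤ ae) (hK : 1 ≤ K) :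
    Tendsto (fun N : ℕ =>
      Real.logb 2 (1 + 2 * θ * βk * (ρ / Real.sqrt N) * ((N : ℝ) - K) /
        (Real.pi * T * (ak * (ρ / Real.sqrt N)
          + (2 * θ * βk * (ρ / Real.sqrt N) / Real.pi) * (1 - σ2)
          + βk * σq2 * (ρ / Real.sqrt N) + 1)))
      - Real.logb 2 (1 + 2 * θ * βe * (ρ / Real.sqrt N) *
          (κ * ((N : ℝ) - K - 1) + 1 / σ2) /
        (Real.pi * T * (ae * (ρ / Real.sqrt N)
          + βe * (ρ / Real.sqrt N) * σq2 + 1))))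
      atTop (nhds (Real.logb 2 (βk / (κ * βe)))) := by
  refine (stmt_9_general (tendsto_const_div_sqrt_natCast ρ) (tendsto_natCast_mul_const_div_sqrt hρ)
    hθ.1 hβk hβe hκ hT (ak + 2 * θ * βk / Real.pi * (1 - σ2) + βk * σq2) (ae + βe * σq2)
    (1 / σ2) K).congr fun N => ?_
  ring_nf
end

section
/- Let ρ > 0, θ ∈ (0,1), β_k > 0, β_e > 0, κ > 0, σ² ∈ (0,1), σ_q² ≥ 0, T' > 0, a_k ≥ 0, a_e ≥ 0 be real numbers. For each natural number N ≥ 1, set p(N) = ρ/√N, B₁(N) = π·T'·( 2θ β_k p(N)/π + a_k p(N) + β_k σ_q² p(N) + 1 ) and B₂(N) = π·T'·( a_e p(N) + β_e p(N) σ_q² + 1 ). Then, as N tends to infinity, the quantity log₂(1 + 2θ β_k σ⁴ p(N) N/B₁(N)) − log₂(1 + 2θ β_e p(N) σ² (κ σ² N + 1)/B₂(N)) converges to log₂( β_k / (κ β_e) ). -/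
open Filter

/-!
With `t = p N * N`, the signal-to-noise ratios of the user and of the eavesdropper both grow
linearly in `t → ∞`, because both noise terms tend to `π * T'` as `p N → 0`. So each rate is
`logb 2 t + logb 2 (slope) + o(1)`; the divergent terms cancel in the difference, and the ratio of
the two slopes is `βk / (κ * βe)`.
-/

section LinearGrowth

variable {ι : Type*} {l : Filter ι} {t f : ι → ℝ} {x : ℝ}

lemma tendsto_logb_one_add_sub_logb (b : ℝ) (ht : Tendsto t l atTop)
    (hf : Tendsto (fun i => f i / t i) l (nhds x)) (hx : x ≠ 0) :
    Tendsto (fun i => Real.logb b (1 + f i) - Real.logb b (t i)) l (nhds (Real.logb b x)) := by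
  have h_ratio : Tendsto (fun i => (1 + f i) / t i) l (nhds x) := by
    simpa only [add_div, zero_add] using (tendsto_const_nhds.div_atTop ht).add hf
  refine ((h_ratio.log hx).div_const (Real.log b)).congr' ?_
  filter_upwards [h_ratio.eventually_ne hx] with i hi
  obtain ⟨h_num, h_den⟩ := div_ne_zero_iff.mp hi
  exact Real.logb_div h_num h_den

lemma tendsto_logb_one_add_div_sub_logb (b : ℝ) {s d : ι → ℝ} {y : ℝ} (ht : Tendsto t l atTop)
    (hs : Tendsto (fun i => s i / t i) l (nhds x)) (hd : Tendsto d l (nhds y))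
    (hx : x ≠ 0) (hy : y ≠ 0) :
    Tendsto (fun i => Real.logb b (1 + s i / d i) - Real.logb b (t i)) l
      (nhds (Real.logb b (x / y))) := by
  refine tendsto_logb_one_add_sub_logb b ht ?_ (div_ne_zero hx hy)
  exact (hs.div hd hy).congr fun i => div_right_comm (s i) (t i) (d i)

lemma tendsto_const_mul_div_self (a : ℝ) (ht : Tendsto t l atTop) :
    Tendsto (fun i => a * t i / t i) l (nhds a) := by
  refine tendsto_const_nhds.congr' ?_
  filter_upwards [ht.eventually_ne_atTop 0] with i hi
  exact (mul_div_cancel_right₀ a hi).symm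

lemma tendsto_const_mul_add_div_self (a : ℝ) (ht : Tendsto t l atTop)
    (hf : Tendsto f l (nhds x)) :
    Tendsto (fun i => (a * t i + f i) / t i) l (nhds a) := by
  simpa only [add_div, add_zero] using (tendsto_const_mul_div_self a ht).add (hf.div_atTop ht)

lemma tendsto_const_mul_linear_add_one (a c : ℝ) (hf : Tendsto f l (nhds 0)) :
    Tendsto (fun i => a * (c * f i + 1)) l (nhds a) := by
  simpa only [mul_zero, zero_add, mul_one] using ((hf.const_mul c).add_const 1).const_mul a

end LinearGrowth

lemma tendsto_div_sqrt_natCast (ρ : ℝ) :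
    Tendsto (fun N : ℕ => ρ / Real.sqrt N) atTop (nhds 0) :=
  tendsto_const_nhds.div_atTop (Real.tendsto_sqrt_atTop.comp tendsto_natCast_atTop_atTop)

lemma tendsto_div_sqrt_mul_natCast {ρ : ℝ} (hρ : 0 < ρ) :
    Tendsto (fun N : ℕ => ρ / Real.sqrt N * N) atTop atTop := by
  simpa only [div_mul_eq_mul_div, mul_div_assoc, Real.div_sqrt, Function.comp_apply] using
    (Real.tendsto_sqrt_atTop.comp tendsto_natCast_atTop_atTop).const_mul_atTop hρ

theorem stmt_10_general {p : ℕ → ℝ} {θ βk βe κ σ2 T' : ℝ} (σq2 ak ae : ℝ)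
    (hp : Tendsto p atTop (nhds 0)) (hpN : Tendsto (fun N : ℕ => p N * N) atTop atTop)
    (hθ : 0 < θ) (hβk : 0 < βk) (hβe : 0 < βe) (hκ : 0 < κ) (hσ : 0 < σ2) (hT' : 0 < T') :
    Tendsto (fun N : ℕ =>
      Real.logb 2 (1 + 2 * θ * βk * σ2 ^ 2 * p N * (N : ℝ) /
        (Real.pi * T' * (2 * θ * βk * p N / Real.pi + ak * p N + βk * σq2 * p N + 1)))
      - Real.logb 2 (1 + 2 * θ * βe * p N * σ2 * (κ * σ2 * (N : ℝ) + 1) /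
        (Real.pi * T' * (ae * p N + βe * p N * σq2 + 1))))
      atTop (nhds (Real.logb 2 (βk / (κ * βe)))) := by
  have h_noise (c : ℝ) := tendsto_const_mul_linear_add_one (Real.pi * T') c hp
  have h_user := tendsto_logb_one_add_div_sub_logb 2 hpN
    (tendsto_const_mul_div_self (2 * θ * βk * σ2 ^ 2) hpN)
    (h_noise (2 * θ * βk / Real.pi + ak + βk * σq2)) (by positivity) (by positivity)
  have h_eavesdropper := tendsto_logb_one_add_div_sub_logb 2 hpN
    (tendsto_const_mul_add_div_self (2 * θ * βe * κ * σ2 ^ 2) hpN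
      (hp.const_mul (2 * θ * βe * σ2)))
    (h_noise (ae + βe * σq2)) (by positivity) (by positivity)
  have h_slopes : 2 * θ * βk * σ2 ^ 2 / (Real.pi * T') /
      (2 * θ * βe * κ * σ2 ^ 2 / (Real.pi * T')) = βk / (κ * βe) := by
    field_simp
  rw [← h_slopes, Real.logb_div (by positivity) (by positivity)]
  refine (h_user.sub h_eavesdropper).congr fun N => ?_
  rw [sub_sub_sub_cancel_right]
  ring_nf

/-- Corollary 2, MRT-BF: under the 1/√N power-scaling regime the
secrecy-rate lower bound converges to log₂(β_k/(κβ_e)), irrespective of the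
artificial-noise scheme (parameterized by the leakage constants a_k, a_e). -/
theorem stmt_10 (ρ θ βk βe κ σ2 σq2 T' ak ae : ℝ)
    (hρ : 0 < ρ) (hθ : θ ∈ Set.Ioo (0:ℝ) 1) (hβk : 0 < βk) (hβe : 0 < βe)
    (hκ : 0 < κ) (hσ : σ2 ∈ Set.Ioo (0:ℝ) 1) (hσq : 0 ≤ σq2) (hT' : 0 < T')
    (hak : 0 ≤ ak) (hae : 0 ≤ ae) :
    Tendsto (fun N : ℕ =>
      Real.logb 2 (1 + 2 * θ * βk * σ2 ^ 2 * (ρ / Real.sqrt N) * (N : ℝ) /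
        (Real.pi * T' * (2 * θ * βk * (ρ / Real.sqrt N) / Real.pi
          + ak * (ρ / Real.sqrt N) + βk * σq2 * (ρ / Real.sqrt N) + 1)))
      - Real.logb 2 (1 + 2 * θ * βe * (ρ / Real.sqrt N) * σ2 *
          (κ * σ2 * (N : ℝ) + 1) /
        (Real.pi * T' * (ae * (ρ / Real.sqrt N)
          + βe * (ρ / Real.sqrt N) * σq2 + 1))))
      atTop (nhds (Real.logb 2 (βk / (κ * βe)))) :=
  stmt_10_general σq2 ak ae (tendsto_div_sqrt_natCast ρ) (tendsto_div_sqrt_mul_natCast hρ)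
    hθ.1 hβk hβe hκ hσ.1 hT'
end

section
/- Let ρ > 0, θ ∈ (0,1), β_k > 0, β_e > 0, κ > 0, σ² ∈ (0,1), σ_q² ≥ 0, T' > 0, a_k ≥ 0, a_e ≥ 0 be real numbers. For each natural number N ≥ 1, set p(N) = ρ/N, B₁(N) = π·T'·( 2θ β_k p(N)/π + a_k p(N) + β_k σ_q² p(N) + 1 ) and B₂(N) = π·T'·( a_e p(N) + β_e p(N) σ_q² + 1 ). Then, as N tends to infinity, the quantity log₂(1 + 2θ β_k σ⁴ p(N) N/B₁(N)) − log₂(1 + 2θ β_e p(N) σ² (κ σ² N + 1)/B₂(N)) converges to log₂( (π T' + 2θ β_k σ⁴ ρ) / (π T' + 2θ κ β_e σ⁴ ρ) ). -/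
open Filter

/-!
Since `N * p N → ρ` forces `p N → 0`, the noise of both links tends to the same `π T'`, whatever the
artificial-noise and quantization constants are, whereas the beamformed signals gain a factor `N`
and converge to multiples of `ρ`. The common limit `π T'` then cancels in the difference
of logarithms.
-/

open scoped Real Topology

theorem tendsto_zero_of_tendsto_mul_atTop {ι 𝕜 : Type*} [Field 𝕜] [LinearOrder 𝕜]
    [IsStrictOrderedRing 𝕜] [TopologicalSpace 𝕜] [OrderTopology 𝕜]
    {l : Filter ι} {f g : ι → 𝕜} {a : 𝕜}
    (hfg : Tendsto (fun i => f i * g i) l (𝓝 a)) (hg : Tendsto g l atTop) :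
    Tendsto f l (𝓝 0) := by
  refine (hfg.div_atTop hg).congr' ?_
  filter_upwards [hg.eventually_ne_atTop 0] with i hi
  exact mul_div_cancel_right₀ (f i) hi

theorem tendsto_const_div_natCast_mul_natCast {𝕜 : Type*} [DivisionRing 𝕜] [CharZero 𝕜]
    [TopologicalSpace 𝕜] (a : 𝕜) :
    Tendsto (fun n : ℕ => a / n * n) atTop (𝓝 a) := by
  refine tendsto_const_nhds.congr' ?_
  filter_upwards [eventually_ne_atTop 0] with n hn
  exact (div_mul_cancel₀ a (Nat.cast_ne_zero.mpr hn)).symm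

theorem tendsto_logb_one_add_div {ι : Type*} {l : Filter ι} {s d : ι → ℝ} {S D : ℝ} (b : ℝ)
    (hs : Tendsto s l (𝓝 S)) (hd : Tendsto d l (𝓝 D)) (hD : D ≠ 0) (hDS : D + S ≠ 0) :
    Tendsto (fun i => Real.logb b (1 + s i / d i)) l (𝓝 (Real.logb b ((D + S) / D))) := by
  have hsum : Tendsto (fun i => 1 + s i / d i) l (𝓝 ((D + S) / D)) := by
    rw [add_div, div_self hD]
    exact (hs.div hd hD).const_add 1
  exact hsum.logb (div_ne_zero hDS hD)

theorem tendsto_logb_one_add_div_sub_logb_one_add_div {ι : Type*} {l : Filter ι}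
    {s s' d d' : ι → ℝ} {S S' D : ℝ} (b : ℝ)
    (hs : Tendsto s l (𝓝 S)) (hd : Tendsto d l (𝓝 D))
    (hs' : Tendsto s' l (𝓝 S')) (hd' : Tendsto d' l (𝓝 D))
    (hD : D ≠ 0) (hDS : D + S ≠ 0) (hDS' : D + S' ≠ 0) :
    Tendsto (fun i => Real.logb b (1 + s i / d i) - Real.logb b (1 + s' i / d' i)) l
      (𝓝 (Real.logb b ((D + S) / (D + S')))) := by
  have hlim : Real.logb b ((D + S) / (D + S')) =
      Real.logb b ((D + S) / D) - Real.logb b ((D + S') / D) := by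
    rw [← Real.logb_div (div_ne_zero hDS hD) (div_ne_zero hDS' hD), div_div_div_cancel_right₀ hD]
  rw [hlim]
  exact (tendsto_logb_one_add_div b hs hd hD hDS).sub (tendsto_logb_one_add_div b hs' hd' hD hDS')

theorem stmt_11_general {p : ℕ → ℝ} {ρ θ βk βe κ σ2 T' : ℝ} (σq2 ak ae : ℝ)
    (hp : Tendsto (fun N => p N * (N : ℝ)) atTop (𝓝 ρ)) (hT' : 0 < T')
    (hk : 0 < π * T' + 2 * θ * βk * σ2 ^ 2 * ρ)
    (he : 0 < π * T' + 2 * θ * κ * βe * σ2 ^ 2 * ρ) :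
    Tendsto (fun N : ℕ =>
      Real.logb 2 (1 + 2 * θ * βk * σ2 ^ 2 * p N * (N : ℝ) /
        (π * T' * (2 * θ * βk * p N / π + ak * p N + βk * σq2 * p N + 1)))
      - Real.logb 2 (1 + 2 * θ * βe * p N * σ2 * (κ * σ2 * (N : ℝ) + 1) /
        (π * T' * (ae * p N + βe * p N * σq2 + 1))))
      atTop
      (𝓝 (Real.logb 2 ((π * T' + 2 * θ * βk * σ2 ^ 2 * ρ) /
        (π * T' + 2 * θ * κ * βe * σ2 ^ 2 * ρ)))) := by
  have hp₀ : Tendsto p atTop (𝓝 0) :=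
    tendsto_zero_of_tendsto_mul_atTop hp tendsto_natCast_atTop_atTop
  have user_signal : Tendsto (fun N : ℕ => 2 * θ * βk * σ2 ^ 2 * p N * (N : ℝ)) atTop
      (𝓝 (2 * θ * βk * σ2 ^ 2 * ρ)) := by
    simpa only [← mul_assoc] using hp.const_mul (2 * θ * βk * σ2 ^ 2)
  have eavesdropper_signal : Tendsto
      (fun N : ℕ => 2 * θ * βe * p N * σ2 * (κ * σ2 * (N : ℝ) + 1)) atTop
      (𝓝 (2 * θ * κ * βe * σ2 ^ 2 * ρ)) := by
    convert (hp.const_mul (2 * θ * κ * βe * σ2 ^ 2)).add (hp₀.const_mul (2 * θ * βe * σ2))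
      using 2 <;> ring
  have user_noise : Tendsto
      (fun x => π * T' * (2 * θ * βk * x / π + ak * x + βk * σq2 * x + 1)) (𝓝 0) (𝓝 (π * T')) :=
    Continuous.tendsto' (by fun_prop) _ _ (by simp)
  have eavesdropper_noise : Tendsto
      (fun x => π * T' * (ae * x + βe * x * σq2 + 1)) (𝓝 0) (𝓝 (π * T')) :=
    Continuous.tendsto' (by fun_prop) _ _ (by simp)
  exact tendsto_logb_one_add_div_sub_logb_one_add_div 2 user_signal (user_noise.comp hp₀)
    eavesdropper_signal (eavesdropper_noise.comp hp₀) (by positivity) hk.ne' he.ne'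

/-- limit underlying Corollary 3, MRT-BF: under the 1/N
power-scaling regime the secrecy-rate lower bound converges to an explicit
limit independent of the artificial-noise scheme. -/
theorem stmt_11 (ρ θ βk βe κ σ2 σq2 T' ak ae : ℝ)
    (hρ : 0 < ρ) (hθ : θ ∈ Set.Ioo (0:ℝ) 1) (hβk : 0 < βk) (hβe : 0 < βe)
    (hκ : 0 < κ) (hσ : σ2 ∈ Set.Ioo (0:ℝ) 1) (hσq : 0 ≤ σq2) (hT' : 0 < T')
    (hak : 0 ≤ ak) (hae : 0 ≤ ae) :
    Tendsto (fun N : ℕ =>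
      Real.logb 2 (1 + 2 * θ * βk * σ2 ^ 2 * (ρ / (N : ℝ)) * (N : ℝ) /
        (Real.pi * T' * (2 * θ * βk * (ρ / (N : ℝ)) / Real.pi
          + ak * (ρ / (N : ℝ)) + βk * σq2 * (ρ / (N : ℝ)) + 1)))
      - Real.logb 2 (1 + 2 * θ * βe * (ρ / (N : ℝ)) * σ2 *
          (κ * σ2 * (N : ℝ) + 1) /
        (Real.pi * T' * (ae * (ρ / (N : ℝ)) + βe * (ρ / (N : ℝ)) * σq2 + 1))))
      atTop
      (nhds (Real.logb 2 ((Real.pi * T' + 2 * θ * βk * σ2 ^ 2 * ρ) /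
        (Real.pi * T' + 2 * θ * κ * βe * σ2 ^ 2 * ρ)))) := by
  obtain ⟨hθ₀, -⟩ := hθ
  obtain ⟨hσ₀, -⟩ := hσ
  exact stmt_11_general σq2 ak ae (tendsto_const_div_natCast_mul_natCast ρ) hT'
    (by positivity) (by positivity)
end

section
/- Let ρ > 0, θ ∈ (0,1), β_k > 0, β_e > 0, κ > 0, σ² ∈ (0,1), σ_q² ≥ 0, T > 0, a_k ≥ 0, a_e ≥ 0 be real numbers and K ≥ 1 a natural number. For each natural number N ≥ 1, set p(N) = ρ/N, A₁(N) = π·T·( a_k p(N) + (2θ β_k p(N)/π)(1−σ²) + β_k σ_q² p(N) + 1 ) and A₂(N) = π·T·( a_e p(N) + β_e p(N) σ_q² + 1 ). Then, as N tends to infinity, the quantity log₂(1 + 2θ β_k p(N) (N−K)/A₁(N)) − log₂(1 + 2θ β_e p(N) (κ(N−K−1) + 1/σ²)/A₂(N)) converges to log₂( (π T + 2θ β_k ρ) / (π T + 2θ κ β_e ρ) ). -/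
open Filter

/-!
Scaling the power as `ρ / N` exactly offsets an array gain that grows linearly in `N`, so each
signal term converges to a positive constant. The artificial noise, the estimation error and the
quantization noise are not amplified by the array: they are `O(1 / N)` and vanish next to the unit
receiver noise. Both effective noise powers therefore have the same limit, which is why the
difference of the two rates collapses to a single logarithm.
-/

open scoped Topology

section PowerScaling

variable {ι : Type*} {l : Filter ι}

section OrderedField

variable {𝕜 : Type*} [Field 𝕜] [LinearOrder 𝕜] [IsStrictOrderedRing 𝕜] [TopologicalSpace 𝕜]
  [OrderTopology 𝕜] {N : ι → 𝕜}

theorem tendsto_comp_const_div_atTop {X : Type*} [TopologicalSpace X] {f : 𝕜 → X} {x : X}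
    (hN : Tendsto N l atTop) (ρ : 𝕜) (hf : Tendsto f (𝓝 0) (𝓝 x)) :
    Tendsto (fun i => f (ρ / N i)) l (𝓝 x) :=
  hf.comp (hN.const_div_atTop ρ)

theorem tendsto_affine_div_self (hN : Tendsto N l atTop) (κ s : 𝕜) :
    Tendsto (fun i => (κ * N i + s) / N i) l (𝓝 κ) := by
  have hlim : Tendsto (fun i => κ + s / N i) l (𝓝 κ) := by
    simpa using (hN.const_div_atTop s).const_add κ
  refine hlim.congr' ?_
  filter_upwards [hN.eventually_ne_atTop 0] with i hi
  field_simp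

end OrderedField

variable {N : ι → ℝ}

theorem tendsto_logb_one_add_scaled_gain_div {gain noise : ι → ℝ} {b c ρ γ d : ℝ}
    (hgain : Tendsto (fun i => gain i / N i) l (𝓝 γ)) (hnoise : Tendsto noise l (𝓝 d))
    (hd : d ≠ 0) (hne : d + c * γ * ρ ≠ 0) :
    Tendsto (fun i => Real.logb b (1 + c * (ρ / N i) * gain i / noise i)) l
      (𝓝 (Real.logb b (1 + c * γ * ρ / d))) := by
  have hsignal : Tendsto (fun i => c * (ρ / N i) * gain i) l (𝓝 (c * γ * ρ)) :=
    ((hgain.const_mul c).mul_const ρ).congr fun i => by ring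
  have harg : 1 + c * γ * ρ / d ≠ 0 := by
    rw [one_add_div hd]
    exact div_ne_zero hne hd
  exact ((hsignal.div hnoise hd).const_add 1).logb harg

theorem logb_one_add_div_sub_logb_one_add_div {b x y d : ℝ} (hd : d ≠ 0) (hx : d + x ≠ 0)
    (hy : d + y ≠ 0) :
    Real.logb b (1 + x / d) - Real.logb b (1 + y / d) = Real.logb b ((d + x) / (d + y)) := by
  rw [one_add_div hd, one_add_div hd, ← Real.logb_div (div_ne_zero hx hd) (div_ne_zero hy hd),
    div_div_div_cancel_right₀ hd]

/-- The constants `cₖ`, `cₑ` and `s` stand for `2θβ_k`, `2θβ_e` and `1/σ²`. The noise powers enter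
the limit only through their common limit `d`, so the result covers every artificial-noise scheme
whose leakage vanishes as the power is scaled down. -/
theorem stmt_12_general {noiseₖ noiseₑ : ι → ℝ} {b cₖ cₑ ρ κ s K d : ℝ}
    (hN : Tendsto N l atTop) (hnoiseₖ : Tendsto noiseₖ l (𝓝 d)) (hnoiseₑ : Tendsto noiseₑ l (𝓝 d))
    (hd : 0 < d) (hk : 0 < d + cₖ * ρ) (he : 0 < d + cₑ * κ * ρ) :
    Tendsto (fun i => Real.logb b (1 + cₖ * (ρ / N i) * (N i - K) / noiseₖ i) -
        Real.logb b (1 + cₑ * (ρ / N i) * (κ * (N i - K - 1) + s) / noiseₑ i)) l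
      (𝓝 (Real.logb b ((d + cₖ * ρ) / (d + cₑ * κ * ρ)))) := by
  have hgainₖ : Tendsto (fun i => (N i - K) / N i) l (𝓝 1) :=
    (tendsto_affine_div_self hN 1 (-K)).congr fun i => by ring
  have hgainₑ : Tendsto (fun i => (κ * (N i - K - 1) + s) / N i) l (𝓝 κ) :=
    (tendsto_affine_div_self hN κ (s - κ * (K + 1))).congr fun i => by ring
  have hrateₖ := tendsto_logb_one_add_scaled_gain_div (b := b) (c := cₖ) (ρ := ρ) hgainₖ hnoiseₖ
    hd.ne' (by rw [mul_one]; exact hk.ne')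
  have hrateₑ := tendsto_logb_one_add_scaled_gain_div (b := b) hgainₑ hnoiseₑ hd.ne' he.ne'
  rw [← logb_one_add_div_sub_logb_one_add_div hd.ne' hk.ne' he.ne']
  simpa only [mul_one] using hrateₖ.sub hrateₑ

end PowerScaling

/-- limit underlying Corollary 3, ZF-BF: under the 1/N
power-scaling regime the secrecy-rate lower bound converges to an explicit
limit independent of the artificial-noise scheme. -/
theorem stmt_12 (ρ θ βk βe κ σ2 σq2 T ak ae : ℝ) (K : ℕ)
    (hρ : 0 < ρ) (hθ : θ ∈ Set.Ioo (0:ℝ) 1) (hβk : 0 < βk) (hβe : 0 < βe)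
    (hκ : 0 < κ) (hσ : σ2 ∈ Set.Ioo (0:ℝ) 1) (hσq : 0 ≤ σq2) (hT : 0 < T)
    (hak : 0 ≤ ak) (hae : 0 ≤ ae) (hK : 1 ≤ K) :
    Tendsto (fun N : ℕ =>
      Real.logb 2 (1 + 2 * θ * βk * (ρ / (N : ℝ)) * ((N : ℝ) - K) /
        (Real.pi * T * (ak * (ρ / (N : ℝ))
          + (2 * θ * βk * (ρ / (N : ℝ)) / Real.pi) * (1 - σ2)
          + βk * σq2 * (ρ / (N : ℝ)) + 1)))
      - Real.logb 2 (1 + 2 * θ * βe * (ρ / (N : ℝ)) *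
          (κ * ((N : ℝ) - K - 1) + 1 / σ2) /
        (Real.pi * T * (ae * (ρ / (N : ℝ)) + βe * (ρ / (N : ℝ)) * σq2 + 1))))
      atTop
      (nhds (Real.logb 2 ((Real.pi * T + 2 * θ * βk * ρ) /
        (Real.pi * T + 2 * θ * κ * βe * ρ)))) := by
  have hθ₀ : 0 < θ := hθ.1
  have hN : Tendsto (Nat.cast : ℕ → ℝ) atTop atTop := tendsto_natCast_atTop_atTop
  have hnoiseₖ : Tendsto (fun p => Real.pi * T *
      (ak * p + (2 * θ * βk * p / Real.pi) * (1 - σ2) + βk * σq2 * p + 1))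
      (𝓝 0) (𝓝 (Real.pi * T)) := Continuous.tendsto' (by fun_prop) _ _ (by simp)
  have hnoiseₑ : Tendsto (fun p => Real.pi * T * (ae * p + βe * p * σq2 + 1))
      (𝓝 0) (𝓝 (Real.pi * T)) := Continuous.tendsto' (by fun_prop) _ _ (by simp)
  rw [mul_right_comm (2 * θ) κ βe]
  exact stmt_12_general hN (tendsto_comp_const_div_atTop hN ρ hnoiseₖ)
    (tendsto_comp_const_div_atTop hN ρ hnoiseₑ) (by positivity) (by positivity) (by positivity)
end

section
/- Let K ≥ 2 be a natural number, let σ₁², …, σ_K² ∈ (0,1] be real numbers, fix an index k with σ_k² ≤ σ_j² for every j and σ_k² < σ_j² for at least one j, and set T' = Σ_{j=1}^K σ_j² and T = Σ_{j=1}^K 1/σ_j². Let ρ > 0, β_k > 0, β_e > 0, κ > 0 be real numbers with κ β_e < β_k. Then log₂( (π T + 2 β_k ρ)/(π T + 2 κ β_e ρ) ) > log₂( (π T' + 2 β_k σ_k⁴ ρ)/(π T' + 2 κ β_e σ_k⁴ ρ) ). -/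
/-!
Both rates have the form `log ((t + a * s) / (t + b * s))` with `b < a`, which increases with the
ratio `s / t`. Here `t = π T` and `s = 1` for zero-forcing, while `t = π T'` and `s = σ_k⁴` for
maximum-ratio transmission, so zero-forcing wins exactly when `σ_k⁴ T < T'`. For a minimal `σ_k²`
this holds term by term, as `σ_k⁴ / σ_j² ≤ σ_j²`.
-/

section LinearOrderedField

variable {F : Type*} [Field F] [LinearOrder F] [IsStrictOrderedRing F]

theorem add_mul_div_add_mul_lt_iff {a b s t s' t' : F} (hba : b < a)
    (ht : 0 < t + b * s) (ht' : 0 < t' + b * s') :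
    (t' + a * s') / (t' + b * s') < (t + a * s) / (t + b * s) ↔ s' * t < s * t' := by
  have cross_sub : (t + a * s) * (t' + b * s') - (t' + a * s') * (t + b * s) =
      (a - b) * (s * t' - s' * t) := by ring
  rw [div_lt_div_iff₀ ht' ht, ← sub_pos, cross_sub, mul_pos_iff_of_pos_left (sub_pos.2 hba),
    sub_pos]

theorem sq_mul_sum_inv_lt_sum {ι : Type*} {s : Finset ι} {f : ι → F} {m : F} (hm : 0 ≤ m)
    (hle : ∀ i ∈ s, m ≤ f i) (hlt : ∃ i ∈ s, m < f i) :
    m ^ 2 * ∑ i ∈ s, (f i)⁻¹ < ∑ i ∈ s, f i := by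
  simp only [Finset.mul_sum, ← div_eq_mul_inv]
  refine Finset.sum_lt_sum (fun i hi => ?_) ?_
  · have hfi : 0 ≤ f i := hm.trans (hle i hi)
    refine div_le_of_le_mul₀ hfi hfi ?_
    simpa only [sq] using pow_le_pow_left₀ hm (hle i hi) 2
  · obtain ⟨i, hi, hmi⟩ := hlt
    refine ⟨i, hi, (div_lt_iff₀ (hm.trans_lt hmi)).2 ?_⟩
    simpa only [sq] using pow_lt_pow_left₀ hmi hm two_ne_zero

end LinearOrderedField

theorem stmt_15_general {ι : Type*} [Fintype ι] {σ2 : ι → ℝ} (hσ : ∀ j, 0 < σ2 j) (k : ι)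
    {ρ βk βe κ base : ℝ} (hbase : 1 < base) (hρ : 0 < ρ) (hκβe : 0 ≤ κ * βe)
    (hdom : κ * βe < βk) :
    Real.logb base ((Real.pi * (∑ j, σ2 j) + 2 * βk * (σ2 k) ^ 2 * ρ) /
        (Real.pi * (∑ j, σ2 j) + 2 * κ * βe * (σ2 k) ^ 2 * ρ))
      < Real.logb base ((Real.pi * (∑ j, (σ2 j)⁻¹) + 2 * βk * ρ) /
          (Real.pi * (∑ j, (σ2 j)⁻¹) + 2 * κ * βe * ρ)) ↔
      (σ2 k) ^ 2 * ∑ j, (σ2 j)⁻¹ < ∑ j, σ2 j := by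
  have huniv : (Finset.univ : Finset ι).Nonempty := ⟨k, Finset.mem_univ k⟩
  have hT : 0 < Real.pi * ∑ j, (σ2 j)⁻¹ :=
    mul_pos Real.pi_pos (Finset.sum_pos (fun j _ => inv_pos.2 (hσ j)) huniv)
  have hT' : 0 < Real.pi * ∑ j, σ2 j :=
    mul_pos Real.pi_pos (Finset.sum_pos (fun j _ => hσ j) huniv)
  have hβk : 0 < βk := hκβe.trans_lt hdom
  have he : 0 ≤ 2 * κ * βe * ρ := by
    simpa only [mul_assoc] using mul_nonneg (mul_nonneg zero_le_two hκβe) hρ.le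
  have hek : 2 * κ * βe * ρ < 2 * βk * ρ := by
    simpa only [mul_assoc] using mul_lt_mul_of_pos_right (mul_lt_mul_of_pos_left hdom two_pos) hρ
  have ratio_lt_iff := add_mul_div_add_mul_lt_iff (s := 1) (s' := σ2 k ^ 2) hek
    (t := Real.pi * ∑ j, (σ2 j)⁻¹) (t' := Real.pi * ∑ j, σ2 j) (by positivity) (by positivity)
  rw [mul_one, mul_one, one_mul, mul_left_comm, mul_lt_mul_iff_right₀ Real.pi_pos] at ratio_lt_iff
  simp only [mul_right_comm _ (σ2 k ^ 2) ρ]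
  rw [Real.logb_lt_logb_iff hbase (by positivity) (by positivity), ratio_lt_iff]

/-- equation (64), Δ^{PS2} > 0: under the 1/N power-scaling
regime, the asymptotic maximum secrecy rate of ZF-BF strictly exceeds that of
MRT-BF when the rates are positive (κβ_e < β_k) and the intercepted user's
channel-estimate variance is minimal, strictly smaller than at least one
other user's. -/
theorem stmt_15 (K : ℕ) (hK : 2 ≤ K) (σ2 : Fin K → ℝ)
    (hσ : ∀ j, σ2 j ∈ Set.Ioc (0:ℝ) 1) (k : Fin K)
    (hmin : ∀ j, σ2 k ≤ σ2 j) (hstrict : ∃ j, σ2 k < σ2 j)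
    (ρ βk βe κ : ℝ) (hρ : 0 < ρ) (hβk : 0 < βk) (hβe : 0 < βe) (hκ : 0 < κ)
    (hdom : κ * βe < βk) :
    Real.logb 2 ((Real.pi * (∑ j, (σ2 j)⁻¹) + 2 * βk * ρ) /
        (Real.pi * (∑ j, (σ2 j)⁻¹) + 2 * κ * βe * ρ))
      > Real.logb 2 ((Real.pi * (∑ j, σ2 j) + 2 * βk * (σ2 k) ^ 2 * ρ) /
          (Real.pi * (∑ j, σ2 j) + 2 * κ * βe * (σ2 k) ^ 2 * ρ)) :=
  (stmt_15_general (fun j => (hσ j).1) k one_lt_two hρ (mul_pos hκ hβe).le hdom).2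
    (sq_mul_sum_inv_lt_sum (hσ k).1.le (fun j _ => hmin j) (by simpa using hstrict))
end
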